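/- arXiv:1807.02744 — 4 statements merged into one kernel-verified Lean document; each statement's English description precedes it below -/
import Mathlib

section
/- For every integer m ≥ 1, the polynomial 1 − 2T + 2T² divides the polynomial (−1)^m + 2^{2m−2}·T^{4m−4} in ℚ[T]. -/
open Polynomial

/-- `1 − 2T + 2T²` divides `(−1)^m + 2^{2m−2}·T^{4m−4}` in `ℚ[T]`. -/
theorem one_sub_two_X_add_two_X_sq_dvd (m : ℕ) (hm : 1 ≤ m) :
    (1 - 2 * X + 2 * X ^ 2 : Polynomial ℚ) ∣
      (-1 : Polynomial ℚ) ^ m + 2 ^ (2 * m - 2) * X ^ (4 * m - 4) := by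
  obtain ⟨k, rfl⟩ : ∃ k, m = k + 1 := ⟨m - 1, by omega⟩
  have h1 : 2 * (k + 1) - 2 = 2 * k := by omega
  have h2 : 4 * (k + 1) - 4 = 4 * k := by omega
  rw [h1, h2, pow_mul, pow_mul, ← mul_pow]
  have h := sub_dvd_pow_sub_pow ((2 : Polynomial ℚ) ^ 2 * X ^ 4) (-1) k
  have e : (-1 : Polynomial ℚ) ^ (k + 1) + (2 ^ 2 * X ^ 4) ^ k
      = (2 ^ 2 * X ^ 4) ^ k - (-1) ^ k := by
    rw [pow_succ]; ring
  rw [e]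
  exact Dvd.dvd.trans ⟨1 + 2 * X + 2 * X ^ 2, by ring⟩ h
end

section
/- For every integer ℓ ≥ 8 divisible by 4, with m = ℓ/4 and c_ℓ = (−1)^m + 2^{(ℓ−4)/2}, the set of complex zeros of the polynomial P_ℓ(T) = (1/c_ℓ)·((−1)^m + 2^{(ℓ−4)/2}T^{ℓ−4})/(1 − 2T + 2T²) is exactly { z ∈ ℂ : z^{ℓ−4} = (−1)^{m+1}·2^{−(ℓ−4)/2} } \ { (1+i)/2, (1−i)/2 }. -/
open Polynomial Complex

/-- The zeta polynomial `P_ℓ(T) = (1/c_ℓ)·((−1)^{ℓ/4} + 2^{(ℓ−4)/2}·T^{ℓ−4})/(1 − 2T + 2T²)`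
of the normalized Eisenstein polynomial, where `c_ℓ = (−1)^{ℓ/4} + 2^{(ℓ−4)/2}`.
The division is exact in `ℚ[T]` (Euclidean division). -/
noncomputable def zetaPolyEis (ℓ : ℕ) : Polynomial ℚ :=
  Polynomial.C (((-1 : ℚ) ^ (ℓ / 4) + 2 ^ ((ℓ - 4) / 2))⁻¹) *
    ((Polynomial.C ((-1 : ℚ) ^ (ℓ / 4)) +
        Polynomial.C ((2 : ℚ) ^ ((ℓ - 4) / 2)) * Polynomial.X ^ (ℓ - 4)) /
      (1 - 2 * Polynomial.X + 2 * Polynomial.X ^ 2))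

/-- The complex zeros of the zeta polynomial `P_ℓ` are exactly the `(ℓ−4)`-th roots of
`(−1)^{ℓ/4+1}·2^{−(ℓ−4)/2}` other than `(1±i)/2`. -/
theorem zetaPolyEis_zeros (ℓ : ℕ) (hℓ : 8 ≤ ℓ) (h4 : 4 ∣ ℓ) :
    {z : ℂ | Polynomial.aeval z (zetaPolyEis ℓ) = 0} =
      {z : ℂ | z ^ (ℓ - 4) = (-1 : ℂ) ^ (ℓ / 4 + 1) * ((2 : ℂ) ^ ((ℓ - 4) / 2))⁻¹} \
        {(1 + Complex.I) / 2, (1 - Complex.I) / 2} := by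
  obtain ⟨k, rfl⟩ := h4
  obtain ⟨n, rfl⟩ : ∃ n, k = n + 1 := ⟨k - 1, by omega⟩
  have hn : 1 ≤ n := by omega
  have e1 : 4 * (n + 1) / 4 = n + 1 := by omega
  have e2 : 4 * (n + 1) - 4 = 4 * n := by omega
  have e3 : 4 * n / 2 = 2 * n := by omega
  unfold zetaPolyEis
  rw [e1, e2, e3]
  have hc : ((-1 : ℚ) ^ (n + 1) + 2 ^ (2 * n))⁻¹ ≠ 0 := by
    apply inv_ne_zero
    have h1 : (2 : ℚ) ≤ 2 ^ (2 * n) := by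
      calc (2 : ℚ) = 2 ^ 1 := by norm_num
        _ ≤ 2 ^ (2 * n) := pow_le_pow_right₀ (by norm_num) (by omega)
    rcases neg_one_pow_eq_or ℚ (n + 1) with h | h <;> rw [h] <;> intro h' <;> linarith
  set D : ℚ[X] := 1 - 2 * Polynomial.X + 2 * Polynomial.X ^ 2 with hD
  set N : ℚ[X] := Polynomial.C ((-1 : ℚ) ^ (n + 1)) +
    Polynomial.C ((2 : ℚ) ^ (2 * n)) * Polynomial.X ^ (4 * n) with hN
  have hD0 : D ≠ 0 := by
    intro h
    have := congrArg (Polynomial.eval 0) h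
    simp [hD] at this
  have hdvd : D ∣ N := by
    have h1 : N = (4 * Polynomial.X ^ 4) ^ n - (-1) ^ n := by
      rw [hN, mul_pow, ← pow_mul, pow_mul (2 : ℚ), pow_succ]
      simp only [map_mul, map_pow, map_neg, map_one]
      have : (Polynomial.C (2 : ℚ)) ^ 2 = 4 := by
        rw [← map_pow]; norm_num
        exact map_ofNat Polynomial.C 4
      rw [this]; ring
    have h2 : (4 * Polynomial.X ^ 4 : ℚ[X]) - (-1) =
        D * (1 + 2 * Polynomial.X + 2 * Polynomial.X ^ 2) := by
      rw [hD]; ring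
    rw [h1]
    exact (Dvd.intro _ h2.symm).trans (sub_dvd_pow_sub_pow _ _ n)
  obtain ⟨Q, hQ⟩ := hdvd
  have hdiv : N / D = Q := by
    rw [hQ]; exact mul_div_cancel_left₀ Q hD0
  rw [hdiv]
  ext z
  have hNz : aeval z N = (-1 : ℂ) ^ (n + 1) + 2 ^ (2 * n) * z ^ (4 * n) := by
    simp [hN]
  have hDz : aeval z D = 1 - 2 * z + 2 * z ^ 2 := by
    have h2 : aeval z (2 : ℚ[X]) = 2 := map_ofNat _ 2
    simp [hD, h2]
  have hDfac : aeval z D = 2 * (z - (1 + Complex.I) / 2) * (z - (1 - Complex.I) / 2) := by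
    rw [hDz]; linear_combination (1 / 2 : ℂ) * Complex.I_sq
  have hDiff : aeval z D = 0 ↔ z = (1 + Complex.I) / 2 ∨ z = (1 - Complex.I) / 2 := by
    rw [hDfac]; simp [sub_eq_zero]
  have hmul : aeval z N = aeval z D * aeval z Q := by rw [hQ, map_mul]
  have hNiff : aeval z N = 0 ↔
      z ^ (4 * n) = (-1 : ℂ) ^ (n + 1 + 1) * ((2 : ℂ) ^ (2 * n))⁻¹ := by
    have h2 : (2 : ℂ) ^ (2 * n) ≠ 0 := pow_ne_zero _ two_ne_zero
    rw [hNz, eq_mul_inv_iff_mul_eq₀ h2, pow_succ _ (n + 1)]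
    constructor <;> intro h <;> linear_combination h
  have hsimple : aeval z D = 0 → aeval z Q ≠ 0 := by
    intro hd hq
    have hder : aeval z (derivative N) = 0 := by
      rw [hQ, derivative_mul, map_add, map_mul, map_mul, hd, hq]; ring
    have hz : z = 0 := by
      have hn0 : n ≠ 0 := by omega
      rw [hN, derivative_add, derivative_C, zero_add, derivative_C_mul_X_pow, map_mul,
        aeval_C, map_pow, aeval_X] at hder
      rcases mul_eq_zero.1 hder with h | h
      · exfalso
        simp [hn0] at h
      · exact eq_zero_of_pow_eq_zero h
    rw [hDz, hz] at hd
    norm_num at hd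
  have hcz : aeval z (Polynomial.C (((-1 : ℚ) ^ (n + 1) + 2 ^ (2 * n))⁻¹) * Q) = 0 ↔
      aeval z Q = 0 := by
    rw [map_mul, aeval_C, mul_eq_zero, or_iff_right]
    exact (_root_.map_ne_zero _).2 hc
  simp only [Set.mem_ofPred_eq, Set.mem_sdiff, Set.mem_insert_iff, Set.mem_singleton_iff]
  rw [hcz, ← hNiff, ← hDiff, hmul, mul_eq_zero]
  tauto
end

section
/- Let p be an odd prime with p ≠ 3 and p ≠ 5, and set ℓ = 2(p−1), m = ℓ/4 = (p−1)/2, c_ℓ = (−1)^m + 2^{(ℓ−4)/2} = (−1)^{(p−1)/2} + 2^{p−3}. Then every coefficient of the polynomial P_ℓ(T) = (1/c_ℓ)·((−1)^m + 2^{(ℓ−4)/2}T^{ℓ−4})/(1 − 2T + 2T²) ∈ ℚ[T] is p-integral. -/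
open Polynomial

lemma zeta_aux_inv (p : ℕ) [Fact p.Prime] (c : ℤ) (hc : ¬ (p : ℤ) ∣ c) :
    ∃ u : ℤ_[p], PadicInt.Coe.ringHom u = ((c : ℚ_[p]))⁻¹ := by
  have h1 : ¬ ‖(c : ℤ_[p])‖ < 1 := by rwa [PadicInt.norm_int_lt_one_iff_dvd]
  have h2 : IsUnit (c : ℤ_[p]) := by
    by_contra h
    exact h1 (PadicInt.not_isUnit_iff.mp h)
  obtain ⟨u, hu⟩ := h2.exists_right_inv
  refine ⟨u, ?_⟩
  have h3 := congrArg (PadicInt.Coe.ringHom (p := p)) hu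
  rw [map_mul, map_one, map_intCast] at h3
  exact eq_inv_of_mul_eq_one_right h3

lemma zeta_aux (p : ℕ) [Fact p.Prime] (a b c : ℤ) (n k : ℕ) (h2 : ¬ (p : ℤ) ∣ 2)
    (hc : ¬ (p : ℤ) ∣ c) :
    0 ≤ padicValRat p ((C ((c : ℚ)⁻¹) * ((C (a : ℚ) + C (b : ℚ) * X ^ n) /
      (1 - 2 * X + 2 * X ^ 2))).coeff k) := by
  obtain ⟨u, hu⟩ := zeta_aux_inv p 2 h2
  obtain ⟨v, hv⟩ := zeta_aux_inv p c hc
  push_cast at hu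
  rw [← Padic.valuation_ratCast, ← Padic.norm_le_one_iff_val_nonneg]
  have hmon : (X ^ 2 - X + C u : ℤ_[p][X]).Monic := by monicity!
  have key : (C ((c : ℚ)⁻¹) * ((C (a : ℚ) + C (b : ℚ) * X ^ n) /
      (1 - 2 * X + 2 * X ^ 2))).map (Rat.castHom ℚ_[p]) =
      (C v * (C u * ((C (a : ℤ_[p]) + C (b : ℤ_[p]) * X ^ n) /ₘ (X ^ 2 - X + C u)))).map
        (PadicInt.Coe.ringHom (p := p)) := by
    have hD : (1 - 2 * X + 2 * X ^ 2 : ℚ[X]).map (Rat.castHom ℚ_[p]) =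
        C 2 * (X ^ 2 - X + C u : ℤ_[p][X]).map (PadicInt.Coe.ringHom (p := p)) := by
      have : (C (2 : ℚ_[p])) * C (2⁻¹ : ℚ_[p]) = 1 := by
        rw [← C_mul, mul_inv_cancel₀ two_ne_zero, C_1]
      have h2C : (C (2 : ℚ_[p])) = 2 := rfl
      simp only [Polynomial.map_add, Polynomial.map_sub, Polynomial.map_mul, Polynomial.map_pow,
        Polynomial.map_one, Polynomial.map_ofNat, map_X, map_C, hu]
      rw [mul_add, this, h2C]
      ring
    rw [Polynomial.map_mul, Polynomial.map_div, hD, div_C_mul, Polynomial.map_mul,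
      Polynomial.map_mul, map_divByMonic _ hmon, divByMonic_eq_div _ (hmon.map _)]
    simp [hu, hv]
  have hk := congrArg (fun q => q.coeff k) key
  simp only [coeff_map] at hk
  rw [eq_ratCast] at hk
  rw [hk]
  exact PadicInt.norm_le_one _

/-- For an odd prime `p` with `p ≠ 3, 5`, every coefficient of the zeta polynomial
`P_{2(p−1)}` of the normalized Eisenstein polynomial `φ̃_{2(p−1)}` is `p`-integral. -/
theorem zetaPolyEis_coeff_p_integral (p : ℕ) (hp : p.Prime) (hodd : Odd p)
    (h3 : p ≠ 3) (h5 : p ≠ 5) (k : ℕ) :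
    0 ≤ padicValRat p ((zetaPolyEis (2 * (p - 1))).coeff k) := by
  have := Fact.mk hp
  have hp7 : 7 ≤ p := by
    have := hp.two_le
    obtain ⟨r, hr⟩ := hodd
    omega
  have hd : ∀ n : ℕ, 0 < n → n < 7 → n ≠ p → ¬ (p : ℤ) ∣ n := by
    intro n h0 h7 _ h
    have := Nat.le_of_dvd h0 (Int.natCast_dvd_natCast.mp h)
    omega
  have h2 : ¬ (p : ℤ) ∣ 2 := hd 2 (by norm_num) (by norm_num) (by omega)
  have hc : ¬ (p : ℤ) ∣ ((-1) ^ (2 * (p - 1) / 4) + 2 ^ ((2 * (p - 1) - 4) / 2)) := by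
    intro h
    have hco : IsCoprime (2 : ℤ) p :=
      ((Nat.prime_iff_prime_int.mp hp).coprime_iff_not_dvd.mpr h2).symm
    have hf := (Int.ModEq.pow_card_sub_one_eq_one hp hco).symm.dvd
    have he : (2 * (p - 1) - 4) / 2 = p - 3 := by omega
    have he2 : p - 1 = (p - 3) + 2 := by omega
    rw [he] at h
    rw [he2, pow_add] at hf
    have h4 : (p : ℤ) ∣ 4 * ((-1) ^ (2 * (p - 1) / 4) + 2 ^ (p - 3)) - (2 ^ (p - 3) * 2 ^ 2 - 1) :=
      dvd_sub (h.mul_left 4) hf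
    rcases neg_one_pow_eq_or ℤ (2 * (p - 1) / 4) with h1 | h1 <;> rw [h1] at h4
    · apply hd 5 (by norm_num) (by norm_num) (by omega)
      convert h4 using 1
      push_cast
      ring
    · apply hd 3 (by norm_num) (by norm_num) (by omega)
      have h6 : (p : ℤ) ∣ -((3 : ℕ) : ℤ) := by
        convert h4 using 1
        push_cast
        ring
      exact dvd_neg.mp h6
  have := zeta_aux p ((-1) ^ (2 * (p - 1) / 4)) (2 ^ ((2 * (p - 1) - 4) / 2)) _
    (2 * (p - 1) - 4) k h2 hc
  push_cast at this
  exact this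
end

section
/- Let p be an odd prime with p ≥ 5, and set ℓ = 2(p−1), m = (p−1)/2, c_ℓ = (−1)^m + 2^{p−3}. Then every coefficient of the normalized Eisenstein polynomial φ̃_ℓ(x₀,x₁) = x₀^ℓ + x₁^ℓ + Σ_{0<j<ℓ, 4∣j} ((−1)^m · binom(ℓ,j) / c_ℓ) · x₀^{ℓ−j} x₁^{j} is p-integral; that is, for every integer j with 0 < j < ℓ and 4 ∣ j, the rational number (−1)^m · binom(ℓ,j) / c_ℓ has nonnegative p-adic valuation. -/
/-- For an odd prime `p ≥ 5` and `ℓ = 2(p−1)`, every coefficient of the normalized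
Eisenstein polynomial `φ̃_ℓ` is `p`-integral: for each `j` with `0 < j < ℓ` and `4 ∣ j`,
the rational number `(−1)^{(p−1)/2}·C(ℓ,j)/((−1)^{(p−1)/2} + 2^{p−3})` has nonnegative
`p`-adic valuation. -/
theorem normEis_coeff_p_integral (p : ℕ) (hp : p.Prime) (hodd : Odd p) (h5 : 5 ≤ p)
    (j : ℕ) (hj0 : 0 < j) (hjl : j < 2 * (p - 1)) (h4j : 4 ∣ j) :
    0 ≤ padicValRat p ((-1 : ℚ) ^ ((p - 1) / 2) * ((2 * (p - 1)).choose j : ℚ) /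
        ((-1 : ℚ) ^ ((p - 1) / 2) + 2 ^ (p - 3))) := by
  haveI : Fact p.Prime := ⟨hp⟩
  by_cases hp5 : p = 5
  · subst hp5
    obtain rfl : j = 4 := by omega
    have hc : ((2 * (5 - 1)).choose 4 : ℕ) = 70 := by decide
    rw [hc]
    have h14 : ((-1 : ℚ) ^ ((5 - 1) / 2) * ((70 : ℕ) : ℚ) /
        ((-1 : ℚ) ^ ((5 - 1) / 2) + 2 ^ (5 - 3))) = ((14 : ℕ) : ℚ) := by norm_num
    rw [h14, padicValRat.of_nat]
    positivity
  · have hpc : ¬ (p : ℤ) ∣ ((-1 : ℤ) ^ ((p - 1) / 2) + 2 ^ (p - 3)) := by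
      intro hd
      have hcop : IsCoprime (2 : ℤ) p := by
        have h2 : Nat.Coprime 2 p := (Nat.coprime_two_left).2 hodd
        exact_mod_cast Nat.isCoprime_iff_coprime.2 h2
      have hf : (p : ℤ) ∣ 2 ^ (p - 1) - 1 :=
        (Int.ModEq.pow_card_sub_one_eq_one hp hcop).symm.dvd
      have hpow : (2 : ℤ) ^ (p - 1) = 4 * 2 ^ (p - 3) := by
        rw [show p - 1 = 2 + (p - 3) by omega, pow_add]; norm_num
      have h := dvd_sub (hd.mul_left 4) hf
      rw [hpow] at h
      rcases neg_one_pow_eq_or ℤ ((p - 1) / 2) with h1 | h1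
      · rw [h1] at h
        have h' : (p : ℤ) ∣ ((5 : ℕ) : ℤ) := by
          have e : (4 * (1 + 2 ^ (p - 3)) - (4 * 2 ^ (p - 3) - 1) : ℤ) = ((5 : ℕ) : ℤ) := by
            push_cast; ring
          rwa [e] at h
        have := (Nat.prime_dvd_prime_iff_eq hp Nat.prime_five).1 (Int.natCast_dvd_natCast.1 h')
        exact hp5 this
      · rw [h1] at h
        have h' : (p : ℤ) ∣ -((3 : ℕ) : ℤ) := by
          have e : (4 * (-1 + 2 ^ (p - 3)) - (4 * 2 ^ (p - 3) - 1) : ℤ) = -((3 : ℕ) : ℤ) := by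
            push_cast; ring
          rwa [e] at h
        have := Nat.le_of_dvd (by norm_num) (Int.natCast_dvd_natCast.1 ((dvd_neg).1 h'))
        omega
    have hcoe : ((-1 : ℚ) ^ ((p - 1) / 2) * ((2 * (p - 1)).choose j : ℚ) /
        ((-1 : ℚ) ^ ((p - 1) / 2) + 2 ^ (p - 3))) =
        (((-1 : ℤ) ^ ((p - 1) / 2) * ((2 * (p - 1)).choose j : ℤ) : ℤ) : ℚ) /
        (((-1 : ℤ) ^ ((p - 1) / 2) + 2 ^ (p - 3) : ℤ) : ℚ) := by push_cast; rfl
    rw [hcoe]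
    have hc0 : ((-1 : ℤ) ^ ((p - 1) / 2) + 2 ^ (p - 3)) ≠ 0 := fun h0 => hpc (h0 ▸ dvd_zero _)
    have hn0 : ((-1 : ℤ) ^ ((p - 1) / 2) * ((2 * (p - 1)).choose j : ℤ)) ≠ 0 := by
      have := Nat.choose_pos hjl.le
      refine mul_ne_zero (pow_ne_zero _ (by norm_num)) (by exact_mod_cast this.ne')
    rw [padicValRat.div (by exact_mod_cast hn0) (by exact_mod_cast hc0), padicValRat.of_int,
      padicValRat.of_int, padicValInt.eq_zero_of_not_dvd hpc]
    simp
end
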